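/- For a subset B of the 12 octahedron edges, let Γ_B be the simple graph on the 14 vertices {T_1,…,T_8,S_1,…,S_6} whose edges are: all 12 cube edges, all 24 pairs {T_i,S_j} with ⟨T_i,S_j⟩ > 0, and the octahedron edges in B. Then among the graphs Γ_B for which every vertex of Γ_B has even degree (equivalently, every point S_j lies on an even number of edges of B), there are exactly 14 graph-isomorphism classes; one class corresponds to the triangular subdivision of the cube, one corresponds to the monohedral tiling B𝒪, and the remaining 12 classes correspond to the dihedral f-tilings whose prototiles are the Möbius triangle and an isosceles triangle derived from B𝒪 by b-edge assignments. -/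

import Mathlib

open Matrix

section Frozen

attribute [local instance] Classical.propDecidable

/-- `τ = (2√2+1)/7`. -/
noncomputable def tau : ℝ := (2 * Real.sqrt 2 + 1) / 7

/-- The 14 vertices: `pt 0,…,pt 7` are the cube points `T_1,…,T_8`; `pt 8,…,pt 13`
are the octahedron points `S_1,…,S_6`. -/
noncomputable def pt : Fin 14 → Fin 3 → ℝ :=
  ![tau • ![1, 1, 1], tau • ![-1, 1, 1], tau • ![-1, -1, 1], tau • ![1, -1, 1],
    tau • ![1, 1, -1], tau • ![-1, 1, -1], tau • ![-1, -1, -1], tau • ![1, -1, -1],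
    ![0, 0, 1], ![1, 0, 0], ![0, 1, 0], ![-1, 0, 0], ![0, -1, 0], ![0, 0, -1]]

/-- The 12 cube edges: pairs `{T_i, T_k}` differing in exactly one coordinate. -/
noncomputable def cubeEdges : Finset (Sym2 (Fin 14)) :=
  Finset.univ.filter fun e => ∃ u v : Fin 14, u.val < 8 ∧ v.val < 8 ∧ e = s(u, v) ∧
    (Finset.univ.filter fun c : Fin 3 => pt u c ≠ pt v c).card = 1

/-- The 12 octahedron edges: pairs `{S_j, S_l}` with `⟨S_j, S_l⟩ = 0`. -/
noncomputable def octEdges : Finset (Sym2 (Fin 14)) :=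
  Finset.univ.filter fun e => ∃ u v : Fin 14, 8 ≤ u.val ∧ 8 ≤ v.val ∧ e = s(u, v) ∧
    pt u ⬝ᵥ pt v = 0

/-- The 24 pairs `{T_i, S_j}` with `⟨T_i, S_j⟩ > 0`, as unordered pairs. -/
noncomputable def candEdges : Finset (Sym2 (Fin 14)) :=
  (Finset.univ.filter fun p : Fin 14 × Fin 14 =>
    p.1.val < 8 ∧ 8 ≤ p.2.val ∧ 0 < pt p.1 ⬝ᵥ pt p.2).image fun p => s(p.1, p.2)

/-- The simple graph `Γ_B` on the 14 vertices whose edges are the 12 cube edges, the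
24 pairs `{T_i, S_j}` with `⟨T_i, S_j⟩ > 0`, and the octahedron edges in `B`. -/
noncomputable def Γ (B : Finset (Sym2 (Fin 14))) : SimpleGraph (Fin 14) :=
  SimpleGraph.fromEdgeSet ↑(cubeEdges ∪ candEdges ∪ B)

/-- `B` is a subset of the octahedron edges for which every vertex of `Γ_B` has even
degree. -/
noncomputable def Good (B : Finset (Sym2 (Fin 14))) : Prop :=
  B ⊆ octEdges ∧ ∀ v : Fin 14, Even ((Γ B).degree v)

/-- Graph isomorphism between `Γ_B` and `Γ_{B'}`. -/
noncomputable def isoRel (B B' : {B : Finset (Sym2 (Fin 14)) // Good B}) : Prop :=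
  Nonempty (Γ B.1 ≃g Γ B'.1)

end Frozen

/-! ### Computable model -/

section Model

/-- Integer directions of the 14 points. -/
def ptZ : Fin 14 → Fin 3 → ℤ :=
  ![![1, 1, 1], ![-1, 1, 1], ![-1, -1, 1], ![1, -1, 1],
    ![1, 1, -1], ![-1, 1, -1], ![-1, -1, -1], ![1, -1, -1],
    ![0, 0, 1], ![1, 0, 0], ![0, 1, 0], ![-1, 0, 0], ![0, -1, 0], ![0, 0, -1]]

/-- Adjacency rows of the base graph (cube edges and cube-octahedron edges), as bit masks. -/
def baseRows : List ℕ :=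
  [1818, 3365, 6474, 4997, 9889, 11346, 14500, 12888, 15, 153, 51, 102, 204, 240]

def baseAdj (u v : Fin 14) : Bool := (baseRows.getD u.val 0).testBit v.val

/-- Index (below 12) of an octahedron edge, with `12` for a pair that is no edge. -/
def octIdxTable : List (List ℕ) :=
  [[12, 0, 1, 2, 3, 12], [0, 12, 4, 12, 5, 6], [1, 4, 12, 7, 12, 8],
   [2, 12, 7, 12, 9, 10], [3, 5, 12, 9, 12, 11], [12, 6, 8, 10, 11, 12]]

def octIdx (u v : Fin 14) : ℕ :=
  if u.val < 8 then 12 else if v.val < 8 then 12 else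
    (octIdxTable.getD (u.val - 8) []).getD (v.val - 8) 12

def octAdj (m : ℕ) (u v : Fin 14) : Bool :=
  (octIdx u v).blt 12 && m.testBit (octIdx u v)

def fullAdj (m : ℕ) (u v : Fin 14) : Bool := baseAdj u v || octAdj m u v

def octVerts : List (Fin 14) := [8, 9, 10, 11, 12, 13]

def octDeg (m : ℕ) (u : Fin 14) : ℕ := octVerts.countP (octAdj m u)

def goodCode (m : ℕ) : Bool := octVerts.all fun u => (octDeg m u % 2).beq 0

def reps : List ℕ := [0, 19, 58, 175, 188, 492, 511, 688, 847, 860, 870, 1011, 1781, 4095]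

def rep (i : Fin 14) : ℕ := reps.getD i.val 0

/-- Some symmetries of the cube, as permutations of the 14 vertices. -/
def symTable : List (List (Fin 14)) := [
  [0, 1, 2, 3, 4, 5, 6, 7, 8, 9, 10, 11, 12, 13],
  [4, 0, 1, 5, 7, 3, 2, 6, 10, 13, 9, 8, 11, 12],
  [7, 4, 0, 3, 6, 5, 1, 2, 9, 12, 13, 10, 8, 11],
  [7, 6, 5, 4, 3, 2, 1, 0, 13, 9, 12, 11, 10, 8],
  [4, 5, 1, 0, 7, 6, 2, 3, 10, 9, 13, 11, 8, 12],
  [6, 7, 4, 5, 2, 3, 0, 1, 13, 11, 12, 9, 10, 8],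
  [3, 2, 6, 7, 0, 1, 5, 4, 12, 9, 8, 11, 13, 10],
  [7, 4, 5, 6, 3, 0, 1, 2, 13, 12, 9, 10, 11, 8],
  [7, 3, 0, 4, 6, 2, 1, 5, 9, 13, 12, 8, 10, 11],
  [3, 0, 1, 2, 7, 4, 5, 6, 8, 12, 9, 10, 11, 13],
  [3, 7, 6, 2, 0, 4, 5, 1, 12, 8, 9, 13, 11, 10],
  [6, 5, 1, 2, 7, 4, 0, 3, 11, 12, 13, 10, 8, 9],
  [2, 6, 7, 3, 1, 5, 4, 0, 12, 8, 11, 13, 9, 10],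
  [0, 1, 5, 4, 3, 2, 6, 7, 10, 9, 8, 11, 13, 12],
  [6, 2, 3, 7, 5, 1, 0, 4, 12, 13, 11, 8, 9, 10],
  [4, 5, 6, 7, 0, 1, 2, 3, 13, 9, 10, 11, 12, 8],
  [3, 2, 1, 0, 7, 6, 5, 4, 8, 9, 12, 11, 10, 13],
  [2, 3, 0, 1, 6, 7, 4, 5, 8, 11, 12, 9, 10, 13],
  [7, 6, 2, 3, 4, 5, 1, 0, 12, 9, 13, 11, 8, 10],
  [1, 0, 4, 5, 2, 3, 7, 6, 10, 11, 8, 9, 13, 12],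
  [2, 3, 7, 6, 1, 0, 4, 5, 12, 11, 8, 9, 13, 10],
  [0, 4, 5, 1, 3, 7, 6, 2, 10, 8, 9, 13, 11, 12],
  [7, 3, 2, 6, 4, 0, 1, 5, 12, 13, 9, 8, 11, 10],
  [1, 5, 4, 0, 2, 6, 7, 3, 10, 8, 11, 13, 9, 12]]

def app (g : List (Fin 14)) (u : Fin 14) : Fin 14 := g.getD u.val 0

def vertsRev : List (Fin 14) := [13, 12, 11, 10, 9, 8, 7, 6, 5, 4, 3, 2, 1, 0]

def matchAdj (m r : ℕ) (g : List (Fin 14)) : Bool :=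
  vertsRev.all fun u => vertsRev.all fun v => fullAdj m u v == fullAdj r (app g u) (app g v)

theorem mem_vertsRev : ∀ u : Fin 14, u ∈ vertsRev := by decide

theorem symTable_inj : ∀ g ∈ symTable, ∀ u v : Fin 14, app g u = app g v → u = v := by
  decide +kernel

theorem classify : ∀ a b : Fin 64, (!(goodCode (64 * a.val + b.val)) ||
    symTable.any fun g => reps.any fun r => matchAdj (64 * a.val + b.val) r g) = true := by
  decide +kernel

theorem rep_good : ∀ i : Fin 14, goodCode (rep i) = true := by decide +kernel

theorem rep_surj : ∀ r ∈ reps, ∃ i : Fin 14, rep i = r := by decide +kernel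

/-- Number of common neighbours. -/
def codeg (a : Fin 14 → Fin 14 → Bool) (u v : Fin 14) : ℕ :=
  ∑ w, (a u w && a w v).toNat

/-- An isomorphism invariant: a combination of the numbers of closed walks of
length 4 and of length 3. -/
def walkInv (a : Fin 14 → Fin 14 → Bool) : ℕ :=
  ∑ u, ∑ v, (1000 * codeg a u v ^ 2 + (a u v).toNat * codeg a u v)

theorem rep_walkInv : ∀ i j : Fin 14,
    walkInv (fullAdj (rep i)) = walkInv (fullAdj (rep j)) → i = j := by
  have h : ∀ i : Fin 14, walkInv (fullAdj (rep i)) = [1032144, 1338186, 1416192, 1692228,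
      1510204, 1644216, 2118276, 1384192, 1770234, 1644228, 1612216, 1928252, 1928240,
      2664336].getD i.val 0 := by decide +kernel
  intro i j
  rw [h i, h j]
  revert i j
  decide +kernel

theorem walkInv_perm (a b : Fin 14 → Fin 14 → Bool) (σ : Fin 14 ≃ Fin 14)
    (h : ∀ u v, a u v = b (σ u) (σ v)) : walkInv a = walkInv b := by
  have hc : ∀ u v, codeg a u v = codeg b (σ u) (σ v) := by
    intro u v
    unfold codeg
    refine Eq.trans ?_ (Equiv.sum_comp σ _)
    simp only [h]
  unfold walkInv
  refine Eq.trans ?_ (Equiv.sum_comp σ _)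
  refine Finset.sum_congr rfl fun u _ => ?_
  refine Eq.trans ?_ (Equiv.sum_comp σ _)
  refine Finset.sum_congr rfl fun v _ => ?_
  rw [hc, h]

def cubeZ (u v : Fin 14) : Bool :=
  decide (u.val < 8 ∧ v.val < 8 ∧ (Finset.univ.filter fun c : Fin 3 => ptZ u c ≠ ptZ v c).card = 1)

def candZ (u v : Fin 14) : Bool :=
  decide (u.val < 8 ∧ 8 ≤ v.val ∧ 0 < ptZ u ⬝ᵥ ptZ v)

theorem baseAdj_eq : ∀ u v : Fin 14,
    baseAdj u v = (cubeZ u v || cubeZ v u || candZ u v || candZ v u) := by decide +kernel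

theorem baseAdj_irrefl : ∀ u : Fin 14, baseAdj u u = false := by decide +kernel

theorem octIdx_lt_iff : ∀ u v : Fin 14,
    octIdx u v < 12 ↔ (8 ≤ u.val ∧ 8 ≤ v.val ∧ ptZ u ⬝ᵥ ptZ v = 0) := by decide +kernel

theorem octIdx_symm : ∀ u v : Fin 14, octIdx u v = octIdx v u := by decide +kernel

theorem octIdx_irrefl : ∀ u : Fin 14, octIdx u u = 12 := by decide +kernel

theorem octIdx_inj : ∀ u v u' v' : Fin 14, octIdx u v < 12 → octIdx u v = octIdx u' v' →
    s(u, v) = s(u', v') := by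
  have h : ∀ u v u' v' : Fin 14, octIdx u v < 12 → octIdx u v = octIdx u' v' →
    (u = u' ∧ v = v') ∨ (u = v' ∧ v = u') := by decide +kernel
  intro u v u' v' h1 h2
  rw [Sym2.eq_iff]
  exact h u v u' v' h1 h2

theorem base_oct_disj : ∀ u v : Fin 14, octIdx u v < 12 → baseAdj u v = false := by
  decide +kernel

theorem baseDeg_even : ∀ u : Fin 14, Even (∑ v, (baseAdj u v).toNat) := by
  simp only [Nat.even_iff]
  decide +kernel

end Model

attribute [local instance] Classical.propDecidable

theorem octAdj_iff (m : ℕ) (u v : Fin 14) :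
    octAdj m u v = true ↔ octIdx u v < 12 ∧ m.testBit (octIdx u v) = true := by
  unfold octAdj
  rw [Bool.and_eq_true, Nat.blt_eq]

theorem octAdj_low (m : ℕ) (u v : Fin 14) (h : u.val < 8 ∨ v.val < 8) : octAdj m u v = false := by
  rw [Bool.eq_false_iff, Ne, octAdj_iff, octIdx_lt_iff]
  omega

theorem sum_octAdj (m : ℕ) (u : Fin 14) : ∑ v, (octAdj m u v).toNat = octDeg m u := by
  have h : ∀ b : Bool, b.toNat = if b = true then 1 else 0 := by intro b; cases b <;> rfl
  simp only [octDeg, octVerts, List.countP_cons, List.countP_nil, ← h]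
  simp only [Fin.sum_univ_succ, Fin.sum_univ_zero]
  have hl : ∀ v : Fin 14, v.val < 8 → octAdj m u v = false := fun v hv => octAdj_low m u v (Or.inr hv)
  rw [hl 0 (by decide), hl (Fin.succ 0) (by decide), hl (Fin.succ (Fin.succ 0)) (by decide),
    hl (Fin.succ (Fin.succ (Fin.succ 0))) (by decide),
    hl (Fin.succ (Fin.succ (Fin.succ (Fin.succ 0)))) (by decide),
    hl (Fin.succ (Fin.succ (Fin.succ (Fin.succ (Fin.succ 0))))) (by decide),
    hl (Fin.succ (Fin.succ (Fin.succ (Fin.succ (Fin.succ (Fin.succ 0)))))) (by decide),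
    hl (Fin.succ (Fin.succ (Fin.succ (Fin.succ (Fin.succ (Fin.succ (Fin.succ 0))))))) (by decide)]
  simp only [Bool.toNat_false, zero_add, add_zero]
  simp only [Fin.succ_zero_eq_one, Fin.reduceSucc]
  omega

/-! ### Comparison of the real points with their integer directions -/

theorem tau_pos : 0 < tau := by
  unfold tau
  positivity

noncomputable def sc (u : Fin 14) : ℝ := if u.val < 8 then tau else 1

theorem sc_pos (u : Fin 14) : 0 < sc u := by
  unfold sc
  split_ifs
  · exact tau_pos
  · exact one_pos

theorem pt_eq (u : Fin 14) (c : Fin 3) : pt u c = sc u * (ptZ u c : ℝ) := by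
  fin_cases u <;> fin_cases c <;> simp [pt, sc, ptZ]

theorem dot_eq (u v : Fin 14) :
    pt u ⬝ᵥ pt v = sc u * sc v * ((ptZ u ⬝ᵥ ptZ v : ℤ) : ℝ) := by
  simp only [dotProduct, Fin.sum_univ_three, pt_eq]
  push_cast
  ring

theorem dot_zero_iff (u v : Fin 14) : pt u ⬝ᵥ pt v = 0 ↔ ptZ u ⬝ᵥ ptZ v = 0 := by
  rw [dot_eq, mul_eq_zero_iff_left (mul_pos (sc_pos u) (sc_pos v)).ne', Int.cast_eq_zero]

theorem dot_pos_iff (u v : Fin 14) : 0 < pt u ⬝ᵥ pt v ↔ 0 < ptZ u ⬝ᵥ ptZ v := by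
  rw [dot_eq, mul_pos_iff_of_pos_left (mul_pos (sc_pos u) (sc_pos v)), Int.cast_pos]

theorem ne_iff (u v : Fin 14) (hu : u.val < 8) (hv : v.val < 8) (c : Fin 3) :
    pt u c ≠ pt v c ↔ ptZ u c ≠ ptZ v c := by
  rw [pt_eq, pt_eq, sc, sc, if_pos hu, if_pos hv, Ne, mul_right_inj' tau_pos.ne', Int.cast_inj]

theorem cubeZ_iff (u v : Fin 14) : cubeZ u v = true ↔ (u.val < 8 ∧ v.val < 8 ∧
    (Finset.univ.filter fun c : Fin 3 => pt u c ≠ pt v c).card = 1) := by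
  unfold cubeZ
  rw [decide_eq_true_iff]
  refine and_congr_right fun hu => and_congr_right fun hv => ?_
  have : (Finset.univ.filter fun c : Fin 3 => pt u c ≠ pt v c) =
      Finset.univ.filter fun c : Fin 3 => ptZ u c ≠ ptZ v c :=
    Finset.filter_congr fun c _ => ne_iff u v hu hv c
  rw [this]

theorem candZ_iff (u v : Fin 14) :
    candZ u v = true ↔ (u.val < 8 ∧ 8 ≤ v.val ∧ 0 < pt u ⬝ᵥ pt v) := by
  unfold candZ
  rw [decide_eq_true_iff, dot_pos_iff]

theorem mem_cube (u v : Fin 14) :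
    s(u, v) ∈ cubeEdges ↔ (cubeZ u v = true ∨ cubeZ v u = true) := by
  unfold cubeEdges
  rw [Finset.mem_filter, cubeZ_iff, cubeZ_iff]
  constructor
  · rintro ⟨-, a, b, ha, hb, he, hc⟩
    rcases Sym2.eq_iff.1 he with ⟨rfl, rfl⟩ | ⟨rfl, rfl⟩
    · exact Or.inl ⟨ha, hb, hc⟩
    · exact Or.inr ⟨ha, hb, hc⟩
  · rintro (⟨ha, hb, hc⟩ | ⟨ha, hb, hc⟩)
    · exact ⟨Finset.mem_univ _, u, v, ha, hb, rfl, hc⟩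
    · exact ⟨Finset.mem_univ _, v, u, ha, hb, Sym2.eq_swap, hc⟩

theorem mem_cand (u v : Fin 14) :
    s(u, v) ∈ candEdges ↔ (candZ u v = true ∨ candZ v u = true) := by
  unfold candEdges
  rw [Finset.mem_image, candZ_iff, candZ_iff]
  constructor
  · rintro ⟨⟨a, b⟩, hab, he⟩
    have h := (Finset.mem_filter.1 hab).2
    rcases Sym2.eq_iff.1 he with ⟨rfl, rfl⟩ | ⟨rfl, rfl⟩
    · exact Or.inl h
    · exact Or.inr h
  · rintro (h | h)
    · exact ⟨(u, v), Finset.mem_filter.2 ⟨Finset.mem_univ _, h⟩, rfl⟩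
    · exact ⟨(v, u), Finset.mem_filter.2 ⟨Finset.mem_univ _, h⟩, Sym2.eq_swap⟩

theorem mem_base (u v : Fin 14) :
    (s(u, v) ∈ cubeEdges ∨ s(u, v) ∈ candEdges) ↔ baseAdj u v = true := by
  rw [mem_cube, mem_cand, baseAdj_eq]
  simp only [Bool.or_eq_true]
  tauto

theorem mem_oct (u v : Fin 14) : s(u, v) ∈ octEdges ↔ octIdx u v < 12 := by
  unfold octEdges
  rw [Finset.mem_filter]
  constructor
  · rintro ⟨-, a, b, ha, hb, he, hc⟩
    have h := (octIdx_lt_iff a b).2 ⟨ha, hb, (dot_zero_iff a b).1 hc⟩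
    rcases Sym2.eq_iff.1 he with ⟨rfl, rfl⟩ | ⟨rfl, rfl⟩
    · exact h
    · rwa [octIdx_symm]
  · intro h
    obtain ⟨ha, hb, hc⟩ := (octIdx_lt_iff u v).1 h
    exact ⟨Finset.mem_univ _, u, v, ha, hb, rfl, (dot_zero_iff u v).2 hc⟩

/-! ### Codes of edge sets -/

/-- `m` is the bit code of the set `B` of octahedron edges. -/
def IsCode (B : Finset (Sym2 (Fin 14))) (m : ℕ) : Prop :=
  ∀ u v : Fin 14, s(u, v) ∈ B ↔ octAdj m u v = true

theorem IsCode.subset {B : Finset (Sym2 (Fin 14))} {m : ℕ} (h : IsCode B m) : B ⊆ octEdges := by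
  intro e
  induction e using Sym2.ind with
  | _ u v =>
    intro he
    exact (mem_oct u v).2 ((octAdj_iff _ _ _).1 ((h u v).1 he)).1

theorem exists_code (B : Finset (Sym2 (Fin 14))) (hB : B ⊆ octEdges) :
    ∃ m < 4096, IsCode B m := by
  let f : Fin 12 → Bool := fun k => decide (∃ u v, octIdx u v = k.val ∧ s(u, v) ∈ B)
  refine ⟨Nat.ofBits f, Nat.ofBits_lt_two_pow f, fun u v => ?_⟩
  rw [octAdj_iff]
  constructor
  · intro h
    have hlt := (mem_oct u v).1 (hB h)
    refine ⟨hlt, ?_⟩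
    rw [Nat.testBit_ofBits_lt f _ hlt]
    exact decide_eq_true ⟨u, v, rfl, h⟩
  · rintro ⟨hlt, h⟩
    rw [Nat.testBit_ofBits_lt f _ hlt] at h
    obtain ⟨a, b, hab, hm⟩ := of_decide_eq_true h
    have := octIdx_inj u v a b hlt hab.symm
    rwa [this]

/-- The edge set with a given code. -/
noncomputable def decode (m : ℕ) : Finset (Sym2 (Fin 14)) :=
  Finset.univ.filter fun e => ∃ u v : Fin 14, e = s(u, v) ∧ octAdj m u v = true

theorem octAdj_symm (m : ℕ) (u v : Fin 14) : octAdj m u v = octAdj m v u := by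
  unfold octAdj
  rw [octIdx_symm]

theorem isCode_decode (m : ℕ) : IsCode (decode m) m := by
  intro u v
  unfold decode
  rw [Finset.mem_filter]
  constructor
  · rintro ⟨-, a, b, he, h⟩
    rcases Sym2.eq_iff.1 he with ⟨rfl, rfl⟩ | ⟨rfl, rfl⟩
    · exact h
    · rwa [octAdj_symm]
  · intro h
    exact ⟨Finset.mem_univ _, u, v, rfl, h⟩

theorem adj_iff {B : Finset (Sym2 (Fin 14))} {m : ℕ} (h : IsCode B m) (u v : Fin 14) :
    (Γ B).Adj u v ↔ fullAdj m u v = true := by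
  unfold Γ fullAdj
  rw [SimpleGraph.fromEdgeSet_adj, Finset.mem_coe, Finset.mem_union, Finset.mem_union,
    mem_base, h u v, Bool.or_eq_true]
  refine and_iff_left_of_imp ?_
  rintro (h | h) rfl
  · rw [baseAdj_irrefl] at h
    exact absurd h (by simp)
  · rw [octAdj_iff, octIdx_irrefl] at h
    omega

theorem fullAdj_toNat (m : ℕ) (u v : Fin 14) :
    (fullAdj m u v).toNat = (baseAdj u v).toNat + (octAdj m u v).toNat := by
  unfold fullAdj
  by_cases h : octAdj m u v = true
  · have := base_oct_disj u v ((octAdj_iff _ _ _).1 h).1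
    simp [this]
  · rw [Bool.not_eq_true] at h
    simp [h]

theorem card_filter_bool (f : Fin 14 → Bool) :
    (Finset.univ.filter fun v => f v = true).card = ∑ v, (f v).toNat := by
  rw [Finset.card_filter]
  refine Finset.sum_congr rfl fun v _ => ?_
  cases f v <;> simp

theorem degree_even_iff {B : Finset (Sym2 (Fin 14))} {m : ℕ} (h : IsCode B m) (u : Fin 14) :
    Even ((Γ B).degree u) ↔ Even (octDeg m u) := by
  have hd : (Γ B).degree u = ∑ v, (baseAdj u v).toNat + octDeg m u := by
    rw [← sum_octAdj, ← Finset.sum_add_distrib, ← SimpleGraph.card_neighborFinset_eq_degree,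
      SimpleGraph.neighborFinset_eq_filter]
    simp only [adj_iff h, ← fullAdj_toNat]
    rw [← card_filter_bool]
  rw [hd, Nat.even_add]
  simp [baseDeg_even u]

theorem octDeg_low (m : ℕ) (u : Fin 14) (hu : u.val < 8) : octDeg m u = 0 := by
  rw [← sum_octAdj]
  simp [octAdj_low m u _ (Or.inl hu)]

theorem card_inc {B : Finset (Sym2 (Fin 14))} {m : ℕ} (h : IsCode B m) (u : Fin 14) :
    (B.filter fun e => u ∈ e).card = octDeg m u := by
  have : (B.filter fun e => u ∈ e) =
      (Finset.univ.filter fun v => octAdj m u v = true).image fun v => s(u, v) := by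
    ext e
    rw [Finset.mem_filter, Finset.mem_image]
    constructor
    · rintro ⟨he, v, rfl⟩
      exact ⟨v, Finset.mem_filter.2 ⟨Finset.mem_univ _, (h u v).1 he⟩, rfl⟩
    · rintro ⟨v, hv, rfl⟩
      exact ⟨(h u v).2 (Finset.mem_filter.1 hv).2, Sym2.mem_mk_left u v⟩
  rw [this, Finset.card_image_of_injective, card_filter_bool, sum_octAdj]
  intro v w hvw
  exact Sym2.congr_right.1 hvw

theorem all_even_iff {B : Finset (Sym2 (Fin 14))} {m : ℕ} (h : IsCode B m) :
    (∀ v : Fin 14, Even ((Γ B).degree v)) ↔ ∀ u : Fin 14, 8 ≤ u.val → Even (octDeg m u) := by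
  constructor
  · intro hv u _
    exact (degree_even_iff h u).1 (hv u)
  · intro hv u
    rw [degree_even_iff h u]
    by_cases hu : 8 ≤ u.val
    · exact hv u hu
    · rw [octDeg_low m u (by omega)]
      exact Even.zero

theorem mem_octVerts (u : Fin 14) : u ∈ octVerts ↔ 8 ≤ u.val := by
  fin_cases u <;> simp [octVerts]

theorem goodCode_iff (m : ℕ) :
    goodCode m = true ↔ ∀ u : Fin 14, 8 ≤ u.val → Even (octDeg m u) := by
  unfold goodCode
  rw [List.all_eq_true]
  simp only [mem_octVerts, Nat.even_iff, Nat.beq_eq]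

theorem good_iff {B : Finset (Sym2 (Fin 14))} {m : ℕ} (h : IsCode B m) :
    Good B ↔ goodCode m = true := by
  unfold Good
  rw [all_even_iff h, goodCode_iff]
  exact and_iff_right h.subset

/-! ### Isomorphism classes -/

theorem walkInv_iso {B B' : Finset (Sym2 (Fin 14))} {m m' : ℕ} (h : IsCode B m)
    (h' : IsCode B' m') (φ : Γ B ≃g Γ B') : walkInv (fullAdj m) = walkInv (fullAdj m') := by
  refine walkInv_perm _ _ φ.toEquiv fun u v => ?_
  rw [Bool.eq_iff_iff, ← adj_iff h, ← adj_iff h']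
  exact φ.map_rel_iff.symm

theorem isoRel_equivalence : Equivalence isoRel where
  refl _ := ⟨SimpleGraph.Iso.refl⟩
  symm := fun ⟨φ⟩ => ⟨φ.symm⟩
  trans := fun ⟨φ⟩ ⟨ψ⟩ => ⟨φ.trans ψ⟩

theorem exists_rep {B : Finset (Sym2 (Fin 14))} (hB : Good B) :
    ∃ i : Fin 14, Nonempty (Γ (decode (rep i)) ≃g Γ B) := by
  obtain ⟨m, hm, hc⟩ := exists_code B hB.1
  have hg := (good_iff hc).1 hB
  have hcl := classify ⟨m / 64, by omega⟩ ⟨m % 64, by omega⟩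
  have hdm : 64 * (m / 64) + m % 64 = m := Nat.div_add_mod m 64
  simp only [hdm] at hcl
  simp only [hg, Bool.not_true, Bool.false_or, List.any_eq_true] at hcl
  obtain ⟨g, hgs, r, hr, hmatch⟩ := hcl
  obtain ⟨i, rfl⟩ := rep_surj r hr
  refine ⟨i, ⟨SimpleGraph.Iso.symm ?_⟩⟩
  have hinj : Function.Injective (app g) := fun u v => symTable_inj g hgs u v
  refine ⟨Equiv.ofBijective (app g) (Finite.injective_iff_bijective.1 hinj), ?_⟩
  intro u v
  rw [Equiv.ofBijective_apply, Equiv.ofBijective_apply, adj_iff (isCode_decode _), adj_iff hc]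
  unfold matchAdj at hmatch
  rw [List.all_eq_true] at hmatch
  have h1 := hmatch u (mem_vertsRev u)
  rw [List.all_eq_true] at h1
  have h2 := h1 v (mem_vertsRev v)
  rw [eq_of_beq h2]

theorem decode_good (i : Fin 14) : Good (decode (rep i)) :=
  (good_iff (isCode_decode _)).2 (rep_good i)

noncomputable def repClass (i : Fin 14) : Quot isoRel := Quot.mk _ ⟨decode (rep i), decode_good i⟩

theorem repClass_bijective : Function.Bijective repClass := by
  constructor
  · intro i j hij
    have h : isoRel _ _ := (Equivalence.quot_mk_eq_iff isoRel_equivalence _ _).1 hij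
    obtain ⟨φ⟩ := h
    exact rep_walkInv i j (walkInv_iso (isCode_decode _) (isCode_decode _) φ)
  · intro q
    induction q using Quot.ind with
    | _ B =>
      obtain ⟨i, hi⟩ := exists_rep B.2
      exact ⟨i, Quot.sound hi⟩

/-- Among the graphs `Γ_B` with all degrees even (equivalently, every point `S_j`
lies on an even number of edges of `B`) there are exactly `14` graph-isomorphism
classes; one class corresponds to the triangular subdivision of the cube, one to the
monohedral tiling `B𝒪`, and the remaining `12` classes correspond to the dihedral
f-tilings with prototiles the Möbius triangle and an isosceles triangle derived from
`B𝒪` by `b`-edge assignments. -/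
theorem stmt_17 :
    Nat.card (Quot isoRel) = 14 ∧
    ∀ B ⊆ octEdges, ((∀ v : Fin 14, Even ((Γ B).degree v)) ↔
      ∀ u : Fin 14, 8 ≤ u.val → Even (B.filter fun e => u ∈ e).card) := by
  refine ⟨?_, fun B hB => ?_⟩
  · rw [← Nat.card_congr (Equiv.ofBijective repClass repClass_bijective), Nat.card_eq_fintype_card,
      Fintype.card_fin]
  · obtain ⟨m, -, hc⟩ := exists_code B hB
    rw [all_even_iff hc]
    simp only [card_inc hc]
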